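/- Fix c ≥ 1 and partitions ν₁ = (ν₁₁,…,ν₁ℓ₁) and ν₂ = (ν₂₁,…,ν₂ℓ₂) of the same positive integer s, such that no part of ν₁ equals a part of ν₂. Equip the rectangle Δ of width c and height s with boundary data μ₁ = (c) on the bottom edge, μ₂ = (c) on the top edge, ν₁ on the left edge and ν₂ on the right edge. Then the sum of mult(γ) over all λ-increasing lattice paths γ from (0,s) to (c,0) in Δ with ℓ₁+ℓ₂+1 steps equals (ℓ₁!/|Aut ν₁|) · (ℓ₂!/|Aut ν₂|) · (∏_{j=1}^{ℓ₁} ν₁ⱼ) · (∏_{j=1}^{ℓ₂} ν₂ⱼ) · c^{ℓ₁+ℓ₂}, where |Aut ν| = ∏_k m_k(ν)! and m_k(ν) denotes the number of parts of ν equal to k. -/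

import Mathlib

open Classical

noncomputable section

namespace TropPaths

/-- Lattice points of the plane. -/
abbrev Pt := ℤ × ℤ

/-- The order on `ℤ²` induced by `λ(x,y) = x - εy` for a small irrational `ε > 0`:
`p ≺ q` iff `p₁ < q₁`, or (`p₁ = q₁` and `p₂ > q₂`). -/
def lamLT (p q : Pt) : Prop := p.1 < q.1 ∨ (p.1 = q.1 ∧ q.2 < p.2)

/-- A lattice path, recorded as the list of its points, is `λ`-increasing. -/
def Increasing (γ : List Pt) : Prop := List.Chain' lamLT γ

/-- The determinant of two vectors in `ℤ²`. -/
def det (u v : Pt) : ℤ := u.1 * v.2 - u.2 * v.1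

/-- The `k`-th point of a path (junk value out of range). -/
def pt (γ : List Pt) (k : ℕ) : Pt := γ.getD k (0, 0)

/-- The `k`-th step vector of a path. -/
def stepAt (γ : List Pt) (k : ℕ) : Pt := pt γ (k + 1) - pt γ k

/-- The list of all step vectors of a path. -/
def steps (γ : List Pt) : List Pt := List.zipWith (fun a b => b - a) γ γ.tail

/-- The multiset of down steps `(0,-s)`, `s > 0`, of a path. -/
def downSteps (γ : List Pt) : Multiset Pt :=
  Multiset.filter (fun v => v.1 = 0 ∧ v.2 < 0) (steps γ : Multiset Pt)

/-- The multiset of up-right steps of a path. -/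
def upRightSteps (γ : List Pt) : Multiset Pt :=
  Multiset.filter (fun v => 0 < v.1 ∧ 0 < v.2) (steps γ : Multiset Pt)

/-- The path makes a turn of sign `s` at the (interior) index `k`; for left turns
`s = (0 < ·)`, for right turns `s = (· < 0)`. -/
def TurnAt (s : ℤ → Prop) (γ : List Pt) (k : ℕ) : Prop :=
  0 < k ∧ k + 1 < γ.length ∧ s (det (pt γ k - pt γ (k - 1)) (pt γ (k + 1) - pt γ k))

/-- `k` is the first turn of sign `s` of the path. -/
def FirstTurn (s : ℤ → Prop) (γ : List Pt) (k : ℕ) : Prop :=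
  TurnAt s γ k ∧ ∀ j, TurnAt s γ j → k ≤ j

/-- Twice the area of the triangle with vertices `γ(k-1), γ(k), γ(k+1)`. -/
def triArea2 (γ : List Pt) (k : ℕ) : ℕ :=
  (det (pt γ k - pt γ (k - 1)) (pt γ (k + 1) - pt γ k)).natAbs

/-- The path obtained by cutting the corner at index `k`, i.e. deleting the point `γ(k)`. -/
def cut (γ : List Pt) (k : ℕ) : List Pt := γ.eraseIdx k

/-- The path obtained by completing the parallelogram at index `k`, i.e. replacing
`γ(k)` by `γ(k-1) + γ(k+1) - γ(k)`. -/
def push (γ : List Pt) (k : ℕ) : List Pt :=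
  γ.set k (pt γ (k - 1) + pt γ (k + 1) - pt γ k)

/-- All points of the path lie in `Δ`. -/
def Inside (Δ : Set Pt) (γ : List Pt) : Prop := ∀ z ∈ γ, z ∈ Δ

/-- Mikhalkin's multiplicity recursion, as a functional relation: `MultRel Δ Init s γ m`
means that the recursion (performed always at the *first* turn of sign `s`) assigns the
multiplicity `m` to the path `γ`.  Here `Δ` is the set of lattice points of the polygon,
`Init` the set of initial paths (of multiplicity `1`), and `s` the turn sign
(`0 < ·` for left turns / `mult₊`, `· < 0` for right turns / `mult₋`). -/
inductive MultRel (Δ : Set Pt) (Init : List Pt → Prop) (s : ℤ → Prop) : List Pt → ℕ → Prop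
  | init {γ : List Pt} : Init γ → MultRel Δ Init s γ 1
  | noTurn {γ : List Pt} : ¬Init γ → (∀ k, ¬TurnAt s γ k) → MultRel Δ Init s γ 0
  | stepIn {γ : List Pt} {k m' m'' : ℕ} : ¬Init γ → FirstTurn s γ k →
      Inside Δ (push γ k) → MultRel Δ Init s (cut γ k) m' →
      MultRel Δ Init s (push γ k) m'' →
      MultRel Δ Init s γ (triArea2 γ k * m' + m'')
  | stepOut {γ : List Pt} {k m' : ℕ} : ¬Init γ → FirstTurn s γ k →
      ¬Inside Δ (push γ k) → MultRel Δ Init s (cut γ k) m' →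
      MultRel Δ Init s γ (triArea2 γ k * m')

/-- The multiplicity function determined by Mikhalkin's recursion. -/
def multOf (Δ : Set Pt) (Init : List Pt → Prop) (s : ℤ → Prop) (γ : List Pt) : ℕ :=
  if h : ∃ m, MultRel Δ Init s γ m then h.choose else 0

/-- `γ ≺ δ`: the path `δ` is obtained from `γ` by finitely many steps of the multiplicity
recursion (each step cuts the corner at the first turn of sign `s`, or completes the
parallelogram there). -/
inductive Reaches (Δ : Set Pt) (Init : List Pt → Prop) (s : ℤ → Prop) : List Pt → List Pt → Prop
  | refl (γ : List Pt) : Reaches Δ Init s γ γ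
  | cutStep {γ δ : List Pt} {k : ℕ} : ¬Init γ → FirstTurn s γ k →
      Reaches Δ Init s (cut γ k) δ → Reaches Δ Init s γ δ
  | pushStep {γ δ : List Pt} {k : ℕ} : ¬Init γ → FirstTurn s γ k →
      Inside Δ (push γ k) → Reaches Δ Init s (push γ k) δ → Reaches Δ Init s γ δ

/-- The lattice path starting at `p` with the given list of step vectors. -/
def pathFrom : Pt → List Pt → List Pt
  | p, [] => [p]
  | p, v :: vs => p :: pathFrom (p + v) vs

/-- Horizontal (rightward) steps of the given sizes. -/
def hSteps (l : List ℕ) : List Pt := l.map fun k => ((k : ℤ), 0)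

/-- Vertical downward steps of the given sizes. -/
def dSteps (l : List ℕ) : List Pt := l.map fun k => ((0 : ℤ), -(k : ℤ))

/-- A multiset of positive integers is a partition of `t`. -/
def IsPartition (m : Multiset ℕ) (t : ℕ) : Prop := (∀ k ∈ m, 0 < k) ∧ m.sum = t

/-! ## The rectangle `[0,c] × [0,d]` -/

/-- The lattice points of the rectangle with vertices `(0,0), (c,0), (0,d), (c,d)`. -/
def rect (c d : ℕ) : Set Pt := {z | 0 ≤ z.1 ∧ z.1 ≤ (c : ℤ) ∧ 0 ≤ z.2 ∧ z.2 ≤ (d : ℤ)}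

/-- `β₊`-initial paths of the rectangle: from `p = (0,d)` clockwise along the top edge with
step sizes the parts of `μ₂` and then down the right edge with step sizes the parts of `ν₂`. -/
def InitPlusRect (d : ℕ) (μ₂ ν₂ : Multiset ℕ) (γ : List Pt) : Prop :=
  ∃ s t : List ℕ, (s : Multiset ℕ) = μ₂ ∧ (t : Multiset ℕ) = ν₂ ∧
    γ = pathFrom (0, (d : ℤ)) (hSteps s ++ dSteps t)

/-- `β₋`-initial paths of the rectangle: from `p = (0,d)` counterclockwise down the left edge
with step sizes the parts of `ν₁` and then along the bottom edge with step sizes the parts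
of `μ₁`. -/
def InitMinusRect (d : ℕ) (μ₁ ν₁ : Multiset ℕ) (γ : List Pt) : Prop :=
  ∃ s t : List ℕ, (s : Multiset ℕ) = ν₁ ∧ (t : Multiset ℕ) = μ₁ ∧
    γ = pathFrom (0, (d : ℤ)) (dSteps s ++ hSteps t)

/-- `mult₊` for the rectangle with boundary data `(μ₁, μ₂, ν₁, ν₂)`. -/
def multPlusRect (c d : ℕ) (μ₂ ν₂ : Multiset ℕ) : List Pt → ℕ :=
  multOf (rect c d) (InitPlusRect d μ₂ ν₂) (fun x => 0 < x)

/-- `mult₋` for the rectangle with boundary data `(μ₁, μ₂, ν₁, ν₂)`. -/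
def multMinusRect (c d : ℕ) (μ₁ ν₁ : Multiset ℕ) : List Pt → ℕ :=
  multOf (rect c d) (InitMinusRect d μ₁ ν₁) (fun x => x < 0)

/-- `mult = mult₊ · mult₋` for the rectangle with boundary data `(μ₁, μ₂, ν₁, ν₂)`. -/
def multRect (c d : ℕ) (μ₁ μ₂ ν₁ ν₂ : Multiset ℕ) (γ : List Pt) : ℕ :=
  multPlusRect c d μ₂ ν₂ γ * multMinusRect c d μ₁ ν₁ γ

/-- A `λ`-increasing lattice path from `(0,d)` to `(c,0)` contained in the rectangle. -/
def IsPathRect (c d : ℕ) (γ : List Pt) : Prop :=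
  Increasing γ ∧ γ.head? = some (0, (d : ℤ)) ∧ γ.getLast? = some ((c : ℤ), 0) ∧
    Inside (rect c d) γ

/-- The genericity condition: all subset sums of the `xᵢ` are distinct. -/
def Generic {n : ℕ} (x : Fin n → ℕ) : Prop :=
  ∀ I J : Finset (Fin n), I ≠ J → ∑ i ∈ I, x i ≠ ∑ j ∈ J, x j

/-! ## Admissible pairs and the paths `γ(A,B)` -/

/-- An admissible pair `(A,B)`: pairwise disjoint sequences `A₀,…,A_{c-1}` in `{1,…,n}`
whose entries together partition `{1,…,n}`, and pairwise disjoint subsets `B₀,…,B_{c-1}`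
with union `{1,…,n}`, such that `B₀ ≠ ∅` and
`B_k ⊆ (A₀ ∪ ⋯ ∪ A_k) \ (B₀ ∪ ⋯ ∪ B_{k-1})` for all `k`. -/
def IsAdmissible {c n : ℕ} (A : Fin c → List (Fin n)) (B : Fin c → Finset (Fin n)) : Prop :=
  ((List.ofFn A).flatten : Multiset (Fin n)) = (Finset.univ : Finset (Fin n)).val ∧
  (∀ i : Fin n, ∃! k : Fin c, i ∈ B k) ∧
  (∀ k : Fin c, (k : ℕ) = 0 → (B k).Nonempty) ∧
  ∀ k : Fin c, B k ⊆
    (Finset.univ.filter fun i => ∃ j : Fin c, j ≤ k ∧ i ∈ A j) \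
      (Finset.univ.filter fun i => ∃ j : Fin c, j < k ∧ i ∈ B j)

/-- The steps of `γ(A,B)` in the column `x = k`: down steps of sizes `xᵢ`, `i ∈ A_k`, in
order, followed by the step `(1, Σ_{i ∈ B_k} xᵢ)` to the next column. -/
def colSteps {c n : ℕ} (x : Fin n → ℕ) (A : Fin c → List (Fin n))
    (B : Fin c → Finset (Fin n)) (k : Fin c) : List Pt :=
  ((A k).map fun i => ((0 : ℤ), -(x i : ℤ))) ++ [((1 : ℤ), ∑ i ∈ B k, (x i : ℤ))]

/-- The lattice path `γ(A,B)` associated to an admissible pair, from `(0,d)` to `(c,0)`,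
whose last step is the full right edge. -/
def gammaAB {c n : ℕ} (x : Fin n → ℕ) (A : Fin c → List (Fin n))
    (B : Fin c → Finset (Fin n)) : List Pt :=
  pathFrom (0, ((∑ i, x i : ℕ) : ℤ))
    ((List.ofFn (colSteps x A B)).flatten ++ [((0 : ℤ), -((∑ i, x i : ℕ) : ℤ))])

/-! ## The trapezoid of Lemma 4.? -/

/-- The lattice points of the trapezoid with vertices `(0,0), (0,a), (1,a), (1,b)`. -/
def trap (a b : ℕ) : Set Pt :=
  {z | 0 ≤ z.1 ∧ z.1 ≤ 1 ∧ (b : ℤ) * z.1 ≤ z.2 ∧ z.2 ≤ (a : ℤ)}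

/-- `β₊`-initial paths of the trapezoid: one step of lattice length 1 along the top edge,
then down the right edge with step sizes the parts of `βright`. -/
def InitPlusTrap (a : ℕ) (βright : Multiset ℕ) (γ : List Pt) : Prop :=
  ∃ t : List ℕ, (t : Multiset ℕ) = βright ∧
    γ = pathFrom (0, (a : ℤ)) (((1 : ℤ), (0 : ℤ)) :: dSteps t)

/-! ## Automorphisms of a partition -/

/-- `|Aut ν| = ∏_k m_k(ν)!` where `m_k(ν)` is the number of parts of `ν` equal to `k`. -/
def autCard (m : Multiset ℕ) : ℕ :=
  (m.dedup.map fun k => (m.count k).factorial).prod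


/-! ## Paths in terms of step lists -/

lemma pathFrom_length (p : Pt) (L : List Pt) : (pathFrom p L).length = L.length + 1 := by
  induction L generalizing p with
  | nil => simp [pathFrom]
  | cons v L ih => simp [pathFrom, ih]

lemma pathFrom_inj (p : Pt) {L M : List Pt} (h : pathFrom p L = pathFrom p M) : L = M := by
  induction L generalizing p M with
  | nil =>
    cases M with
    | nil => rfl
    | cons w M => have := congrArg List.length h; simp [pathFrom, pathFrom_length] at this
  | cons v L ih =>
    cases M with
    | nil => have := congrArg List.length h; simp [pathFrom, pathFrom_length] at this
    | cons w M =>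
      simp only [pathFrom, List.cons.injEq, true_and] at h
      have hvw : v = w := by
        have h2 := congrArg List.head? h
        cases L <;> cases M <;> simpa [pathFrom] using h2
      subst hvw
      rw [ih _ h]

lemma exists_pathFrom (p : Pt) (γ : List Pt) : ∃ L, p :: γ = pathFrom p L := by
  induction γ generalizing p with
  | nil => exact ⟨[], rfl⟩
  | cons q γ ih =>
    obtain ⟨L, hL⟩ := ih q
    refine ⟨(q - p) :: L, ?_⟩
    simp [pathFrom, hL]

lemma pathFrom_append (p : Pt) (X Y : List Pt) (v : Pt) :
    pathFrom p (X ++ v :: Y) = pathFrom p X ++ pathFrom (p + X.sum + v) Y := by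
  induction X generalizing p with
  | nil => simp [pathFrom]
  | cons w X ih => simp [pathFrom, ih, add_assoc]

lemma pt_pathFrom (p : Pt) (L : List Pt) (k : ℕ) (hk : k ≤ L.length) :
    pt (pathFrom p L) k = p + (L.take k).sum := by
  induction L generalizing p k with
  | nil => simp at hk; subst hk; simp [pt, pathFrom]
  | cons v L ih =>
    cases k with
    | zero => simp [pt, pathFrom]
    | succ k =>
      have := ih (p + v) k (by simpa using hk)
      simp only [pt] at this
      simp [pt, pathFrom] at this ⊢
      rw [this]; simp [add_assoc]

lemma cut_pathFrom (p : Pt) (X Y : List Pt) (u v : Pt) :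
    cut (pathFrom p (X ++ u :: v :: Y)) (X.length + 1) = pathFrom p (X ++ (u + v) :: Y) := by
  induction X generalizing p with
  | nil => simp [cut, pathFrom, add_assoc]
  | cons w X ih => simpa [cut, pathFrom] using ih (p + w)

lemma pts_pathFrom (p : Pt) (X Y : List Pt) (u v : Pt) :
    pt (pathFrom p (X ++ u :: v :: Y)) X.length = p + X.sum ∧
    pt (pathFrom p (X ++ u :: v :: Y)) (X.length + 1) = p + X.sum + u ∧
    pt (pathFrom p (X ++ u :: v :: Y)) (X.length + 1 + 1) = p + X.sum + u + v := by
  refine ⟨?_, ?_, ?_⟩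
  · rw [pt_pathFrom _ _ _ (by simp)]; simp
  · rw [pt_pathFrom _ _ _ (by simp), List.take_length_add_append]; simp [add_assoc]
  · rw [pt_pathFrom _ _ _ (by simp), add_assoc X.length, List.take_length_add_append]
    simp [add_assoc]

lemma push_pathFrom (p : Pt) (X Y : List Pt) (u v : Pt) :
    push (pathFrom p (X ++ u :: v :: Y)) (X.length + 1) = pathFrom p (X ++ v :: u :: Y) := by
  obtain ⟨h1, h2, h3⟩ := pts_pathFrom p X Y u v
  unfold push
  rw [Nat.add_sub_cancel, h1, h2, h3]
  have : p + X.sum + (p + X.sum + u + v) - (p + X.sum + u) = p + X.sum + v := by abel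
  rw [this]
  clear h1 h2 h3 this
  induction X generalizing p with
  | nil => simp [pathFrom, add_assoc, add_comm u v]
  | cons w X ih => simpa [pathFrom, add_assoc] using ih (p + w)

lemma turnAt_pathFrom (s : ℤ → Prop) (p : Pt) (L : List Pt) (k : ℕ) :
    TurnAt s (pathFrom p L) k ↔
      ∃ X u v Y, L = X ++ u :: v :: Y ∧ k = X.length + 1 ∧ s (det u v) := by
  constructor
  · rintro ⟨hk, hk2, hs⟩
    rw [pathFrom_length] at hk2
    obtain ⟨j, rfl⟩ : ∃ j, k = j + 1 := ⟨k - 1, by omega⟩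
    have hj : j + 1 < L.length := by omega
    have hL : L = L.take j ++ L[j] :: L[j+1] :: L.drop (j + 2) := by
      rw [← List.drop_eq_getElem_cons, ← List.drop_eq_getElem_cons, List.take_append_drop]
    have hlen : (L.take j).length = j := by simp; omega
    refine ⟨L.take j, L[j], L[j+1], L.drop (j + 2), hL, by rw [hlen], ?_⟩
    obtain ⟨e1, e2, e3⟩ := pts_pathFrom p (L.take j) (L.drop (j+2)) L[j] L[j+1]
    rw [← hL, hlen] at e1 e2 e3
    rw [Nat.add_sub_cancel, e1, e2, e3] at hs
    simpa using hs
  · rintro ⟨X, u, v, Y, rfl, rfl, hs⟩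
    obtain ⟨e1, e2, e3⟩ := pts_pathFrom p X Y u v
    refine ⟨by omega, by rw [pathFrom_length]; simp, ?_⟩
    rw [Nat.add_sub_cancel, e1, e2, e3]
    simpa using hs

lemma triArea2_pathFrom (p : Pt) (X Y : List Pt) (u v : Pt) :
    triArea2 (pathFrom p (X ++ u :: v :: Y)) (X.length + 1) = (det u v).natAbs := by
  obtain ⟨e1, e2, e3⟩ := pts_pathFrom p X Y u v
  unfold triArea2
  rw [Nat.add_sub_cancel, e1, e2, e3]
  simp

lemma firstTurn_unique {s : ℤ → Prop} {γ : List Pt} {j k : ℕ} (hj : FirstTurn s γ j)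
    (hk : FirstTurn s γ k) : j = k :=
  le_antisymm (hj.2 _ hk.1) (hk.2 _ hj.1)

lemma multRel_unique {Δ : Set Pt} {Init : List Pt → Prop} {s : ℤ → Prop} {γ : List Pt} {m n : ℕ}
    (hm : MultRel Δ Init s γ m) (hn : MultRel Δ Init s γ n) : m = n := by
  induction hm generalizing n with
  | init h =>
    cases hn with
    | init => rfl
    | noTurn h' => exact absurd h h'
    | stepIn h' => exact absurd h h'
    | stepOut h' => exact absurd h h'
  | noTurn h ht =>
    cases hn with
    | init h' => exact absurd h' h
    | noTurn => rfl
    | stepIn _ h' => exact absurd h'.1 (ht _)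
    | stepOut _ h' => exact absurd h'.1 (ht _)
  | stepIn h hf hin _ _ ih1 ih2 =>
    cases hn with
    | init h' => exact absurd h' h
    | noTurn _ ht => exact absurd hf.1 (ht _)
    | stepIn _ hf' _ a b =>
      have := firstTurn_unique hf hf'
      subst this
      rw [ih1 a, ih2 b]
    | stepOut _ hf' hout =>
      have := firstTurn_unique hf hf'
      subst this
      exact absurd hin hout
  | stepOut h hf hout _ ih1 =>
    cases hn with
    | init h' => exact absurd h' h
    | noTurn _ ht => exact absurd hf.1 (ht _)
    | stepIn _ hf' hin =>
      have := firstTurn_unique hf hf'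
      subst this
      exact absurd hin hout
    | stepOut _ hf' _ a =>
      have := firstTurn_unique hf hf'
      subst this
      rw [ih1 a]

lemma multOf_eq {Δ : Set Pt} {Init : List Pt → Prop} {s : ℤ → Prop} {γ : List Pt} {m : ℕ}
    (hm : MultRel Δ Init s γ m) : multOf Δ Init s γ = m := by
  have h : ∃ m, MultRel Δ Init s γ m := ⟨m, hm⟩
  rw [multOf, dif_pos h]
  exact multRel_unique h.choose_spec hm

lemma multRel_of_ne_zero {Δ : Set Pt} {Init : List Pt → Prop} {s : ℤ → Prop} {γ : List Pt}
    (h : multOf Δ Init s γ ≠ 0) : MultRel Δ Init s γ (multOf Δ Init s γ) := by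
  unfold multOf at h ⊢
  split_ifs with h'
  · exact h'.choose_spec
  · simp [h'] at h

/-- The vertical steps in a list of steps, as a multiset. -/
def vert (L : List Pt) : Multiset Pt := Multiset.filter (fun v => v.1 = 0) (L : Multiset Pt)

/-- Every vertical step of the boundary data survives from the original path. -/
lemma vert_le {Δ : Set Pt} {Init : List Pt → Prop} {s : ℤ → Prop} (hs : ∀ x, s x → x ≠ 0)
    (N : Multiset Pt) (p : Pt) (hI : ∀ L, Init (pathFrom p L) → N ≤ vert L)
    {γ : List Pt} {m : ℕ} (hm : MultRel Δ Init s γ m) :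
    m ≠ 0 → ∀ L, γ = pathFrom p L → (∀ v ∈ L, 0 ≤ v.1) → N ≤ vert L := by
  have hcut : ∀ L X u v Y, L = X ++ u :: v :: Y → s (det u v) → (∀ v ∈ L, (0:ℤ) ≤ v.1) →
      (∀ w ∈ X ++ (u + v) :: Y, (0:ℤ) ≤ w.1) ∧ vert (X ++ (u + v) :: Y) ≤ vert L := by
    rintro L X u v Y rfl hd hx
    have hu := hx u (by simp)
    have hv := hx v (by simp)
    have hne : (u + v).1 ≠ 0 := by
      intro h0
      have h0' : u.1 + v.1 = 0 := h0
      have : u.1 = 0 := by omega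
      have : v.1 = 0 := by omega
      apply hs _ hd
      simp [det, *]
    refine ⟨?_, ?_⟩
    · intro w hw
      simp only [List.mem_append, List.mem_cons] at hw
      rcases hw with hw | rfl | hw
      · exact hx w (by simp [hw])
      · exact add_nonneg hu hv
      · exact hx w (by simp [hw])
    · unfold vert
      rw [← Multiset.coe_add, ← Multiset.coe_add, ← Multiset.cons_coe, ← Multiset.cons_coe,
        ← Multiset.cons_coe, Multiset.filter_add, Multiset.filter_add,
        Multiset.filter_cons_of_neg (p := fun v : Pt => v.1 = 0) _ hne]
      gcongr
      exact (Multiset.le_cons_self _ _).trans (Multiset.le_cons_self _ _)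
  induction hm with
  | init h => rintro _ L rfl _; exact hI L h
  | noTurn => intro h; exact absurd rfl h
  | @stepIn γ k m' m'' h hf _ _ _ ih1 ih2 =>
    rintro hne L rfl hx
    obtain ⟨X, u, v, Y, hL, rfl, hd⟩ := (turnAt_pathFrom _ _ _ _).1 hf.1
    obtain ⟨hx', hle⟩ := hcut _ _ _ _ _ hL hd hx
    by_cases h1 : m' = 0
    · have h2 : m'' ≠ 0 := by rintro rfl; simp [h1] at hne
      subst hL
      have := ih2 h2 (X ++ v :: u :: Y) (push_pathFrom _ _ _ _ _)
        (by intro w hw; apply hx; simp only [List.mem_append, List.mem_cons] at hw ⊢; tauto)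
      have e : vert (X ++ v :: u :: Y) = vert (X ++ u :: v :: Y) := by
        unfold vert
        congr 1
        exact Multiset.coe_eq_coe.2 (List.Perm.append_left _ (List.Perm.swap _ _ _))
      rwa [e] at this
    · refine (ih1 h1 _ ?_ hx').trans hle
      rw [hL]; exact cut_pathFrom _ _ _ _ _
  | @stepOut γ k m' h hf _ _ ih1 =>
    rintro hne L rfl hx
    obtain ⟨X, u, v, Y, hL, rfl, hd⟩ := (turnAt_pathFrom _ _ _ _).1 hf.1
    obtain ⟨hx', hle⟩ := hcut _ _ _ _ _ hL hd hx
    refine (ih1 (by rintro rfl; simp at hne) _ ?_ hx').trans hle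
    rw [hL]; exact cut_pathFrom _ _ _ _ _

/-! ## Counting orderings of a multiset -/

lemma autCard_erase (m : Multiset ℕ) (a : ℕ) (ha : a ∈ m) :
    autCard m = m.count a * autCard (m.erase a) := by
  have h1 : ∀ n : Multiset ℕ, autCard n = ∏ k ∈ n.toFinset, (n.count k).factorial := fun n => rfl
  have h2 : autCard (m.erase a) = ∏ k ∈ m.toFinset, ((m.erase a).count k).factorial := by
    rw [h1]
    apply Finset.prod_subset
    · intro x hx
      simp only [Multiset.mem_toFinset] at hx ⊢
      exact Multiset.mem_of_mem_erase hx
    · intro x _ hx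
      simp only [Multiset.mem_toFinset] at hx
      rw [Multiset.count_eq_zero_of_notMem hx, Nat.factorial_zero]
  have ha' : a ∈ m.toFinset := by simpa using ha
  rw [h2, h1, ← Finset.mul_prod_erase _ _ ha', ← Finset.mul_prod_erase _ _ ha',
    Multiset.count_erase_self, ← mul_assoc,
    Nat.mul_factorial_pred (Multiset.count_pos.2 ha).ne']
  congr 1
  apply Finset.prod_congr rfl
  intro k hk
  rw [Multiset.count_erase_of_ne (Finset.ne_of_mem_erase hk)]

/-- The finite set of orderings of a multiset. -/
def ords (m : Multiset ℕ) : Finset (List ℕ) := m.lists.toFinset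

lemma mem_ords (m : Multiset ℕ) (l : List ℕ) : l ∈ ords m ↔ (l : Multiset ℕ) = m := by
  unfold ords
  rw [Multiset.mem_toFinset, Multiset.mem_lists_iff]
  exact eq_comm

lemma card_ords (n : ℕ) (m : Multiset ℕ) (hm : m.card = n) :
    (ords m).card * autCard m = n.factorial := by
  induction n generalizing m with
  | zero =>
    rw [Multiset.card_eq_zero] at hm
    subst hm
    have : ords 0 = {[]} := by
      ext l
      rw [mem_ords]; simp
    simp [this, autCard]
  | succ n ih =>
    have hU : ords m = m.toFinset.biUnion fun a => (ords (m.erase a)).image (List.cons a) := by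
      ext l
      simp only [mem_ords, Finset.mem_biUnion, Finset.mem_image, Multiset.mem_toFinset]
      constructor
      · rintro rfl
        cases l with
        | nil => simp at hm
        | cons a l => exact ⟨a, by simp, l, by simp, rfl⟩
      · rintro ⟨a, ha, l, hl, rfl⟩
        rw [← Multiset.cons_coe, hl, Multiset.cons_erase ha]
    rw [hU, Finset.card_biUnion, Finset.sum_mul]
    · have : ∀ a ∈ m.toFinset, ((ords (m.erase a)).image (List.cons a)).card * autCard m =
          m.count a * n.factorial := by
        intro a ha
        rw [Multiset.mem_toFinset] at ha
        rw [Finset.card_image_of_injective _ List.cons_injective, autCard_erase m a ha,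
          ← ih (m.erase a) (by rw [Multiset.card_erase_of_mem ha, hm]; rfl)]
        ring
      rw [Finset.sum_congr rfl this, ← Finset.sum_mul, Multiset.toFinset_sum_count_eq, hm,
        Nat.factorial_succ]
    · intro a _ b _ hab
      change Disjoint _ _
      rw [Finset.disjoint_left]
      intro l h1 h2
      simp only [Finset.mem_image] at h1 h2
      obtain ⟨l1, _, rfl⟩ := h1
      obtain ⟨l2, _, h⟩ := h2
      exact hab (List.cons.inj h).1.symm

lemma autCard_pos (m : Multiset ℕ) : 0 < autCard m := by
  have : autCard m = ∏ k ∈ m.toFinset, (m.count k).factorial := rfl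
  rw [this]
  exact Finset.prod_pos fun k _ => Nat.factorial_pos _

/-! ## Evaluation of the multiplicities of the relevant paths -/

lemma increasing_pathFrom (p : Pt) (L : List Pt) :
    Increasing (pathFrom p L) ↔ ∀ v ∈ L, 0 < v.1 ∨ (v.1 = 0 ∧ v.2 < 0) := by
  induction L generalizing p with
  | nil => simp [pathFrom, Increasing, List.Chain']
  | cons v L ih =>
    have h : Increasing (pathFrom p (v :: L)) ↔ lamLT p (p + v) ∧ Increasing (pathFrom (p + v) L) := by
      cases L <;> simp [pathFrom, Increasing, List.Chain', List.isChain_cons_cons]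
    rw [h, ih]
    simp [lamLT]

lemma getLast?_pathFrom (p : Pt) (L : List Pt) :
    (pathFrom p L).getLast? = some (p + L.sum) := by
  induction L generalizing p with
  | nil => simp [pathFrom]
  | cons v L ih =>
    have := ih (p + v)
    simp only [pathFrom, List.getLast?_cons, this]
    simp [add_assoc]

lemma head?_pathFrom (p : Pt) (L : List Pt) : (pathFrom p L).head? = some p := by
  cases L <;> simp [pathFrom]

lemma dSteps_eq (A : List ℕ) : dSteps A = A.map fun k : ℕ => ((0:ℤ), -(k:ℤ)) := by
  unfold dSteps
  induction A with
  | nil => rfl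
  | cons a A ih => simpa using ih

lemma dSteps_nil : dSteps [] = [] := rfl

lemma mem_dSteps {A : List ℕ} {v : Pt} (h : v ∈ dSteps A) : v.1 = 0 ∧ v.2 ≤ 0 := by
  simp only [dSteps_eq, List.mem_map] at h
  obtain ⟨a, _, rfl⟩ := h
  simp

lemma dSteps_sum (A : List ℕ) : (dSteps A).sum = (0, -(A.sum : ℤ)) := by
  induction A with
  | nil => simp [dSteps_eq]; rfl
  | cons a A ih =>
    simp only [dSteps_eq, List.map_cons, List.sum_cons] at ih ⊢
    rw [ih]
    ext <;> simp; ring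

lemma dSteps_injective : Function.Injective dSteps := by
  rw [show dSteps = List.map fun k : ℕ => ((0:ℤ), -(k:ℤ)) from funext dSteps_eq]
  apply List.map_injective_iff.2
  intro a b h
  simpa using h

lemma mem_path_dSteps (x h : ℤ) (A : List ℕ) (z : Pt) (hz : z ∈ pathFrom (x, h) (dSteps A)) :
    z.1 = x ∧ h - A.sum ≤ z.2 ∧ z.2 ≤ h := by
  induction A generalizing h with
  | nil =>
    simp [dSteps_eq, pathFrom] at hz
    subst hz; simp
  | cons a A ih =>
    simp only [dSteps_eq, List.map_cons, pathFrom, List.mem_cons] at hz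
    rcases hz with rfl | hz
    · simp [-Nat.cast_list_sum]; omega
    · have := ih (h - a) (by simpa [dSteps_eq, sub_eq_add_neg] using hz)
      simp only [List.sum_cons, Nat.cast_add]
      refine ⟨this.1, ?_, ?_⟩ <;> linarith [this.2.1, this.2.2, Int.natCast_nonneg a]

lemma mem_start_pathFrom (p : Pt) (X Y : List Pt) (v : Pt) :
    p + X.sum + v ∈ pathFrom p (X ++ v :: Y) := by
  rw [pathFrom_append]
  refine List.mem_append_right _ ?_
  cases Y <;> simp [pathFrom]

lemma coe_eq_singleton {l : List ℕ} {c : ℕ} (h : (l : Multiset ℕ) = {c}) : l = [c] := by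
  rw [← Multiset.coe_singleton, Multiset.coe_eq_coe] at h
  exact List.perm_singleton.1 h

lemma initPlus_iff (s c : ℕ) (ν : Multiset ℕ) (L : List Pt) :
    InitPlusRect s {c} ν (pathFrom (0, (s:ℤ)) L) ↔
      ∃ t : List ℕ, (t : Multiset ℕ) = ν ∧ L = ((c:ℤ), 0) :: dSteps t := by
  constructor
  · rintro ⟨l, t, hl, ht, h⟩
    rw [coe_eq_singleton hl] at h
    exact ⟨t, ht, by simpa [hSteps] using pathFrom_inj _ h⟩
  · rintro ⟨t, ht, rfl⟩
    exact ⟨[c], t, rfl, ht, by simp [hSteps]⟩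

lemma initMinus_iff (s c : ℕ) (ν : Multiset ℕ) (L : List Pt) :
    InitMinusRect s {c} ν (pathFrom (0, (s:ℤ)) L) ↔
      ∃ t : List ℕ, (t : Multiset ℕ) = ν ∧ L = dSteps t ++ [((c:ℤ), 0)] := by
  constructor
  · rintro ⟨t, l, ht, hl, h⟩
    rw [coe_eq_singleton hl] at h
    exact ⟨t, ht, by simpa [hSteps] using pathFrom_inj _ h⟩
  · rintro ⟨t, ht, rfl⟩
    exact ⟨t, [c], ht, rfl, by simp [hSteps]⟩

lemma mem_of_split {D R X Y : List Pt} {u : Pt} (h : D ++ R = X ++ u :: Y)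
    (hl : X.length < D.length) : u ∈ D := by
  have h1 : (D ++ R)[X.length]? = some u := by rw [h]; simp
  rw [List.getElem?_append_left hl] at h1
  exact List.mem_of_getElem? h1

lemma mem_of_split_right {D R X Y : List Pt} {u : Pt} (h : D ++ R = X ++ u :: Y)
    (hl : D.length ≤ X.length) : u ∈ R := by
  have h1 : (D ++ R)[X.length]? = some u := by rw [h]; simp
  rw [List.getElem?_append_right hl] at h1
  exact List.mem_of_getElem? h1

lemma plus_eval (c s : ℕ) (hc : 0 < c) (ν : Multiset ℕ) (B A : List ℕ) (hA : ∀ a ∈ A, 0 < a) :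
    MultRel (rect c s) (InitPlusRect s {c} ν) (fun x => 0 < x)
      (pathFrom (0, (s:ℤ)) (dSteps A ++ ((c:ℤ), (A.sum : ℤ)) :: dSteps B))
      (if (B : Multiset ℕ) = ν then c ^ A.length * A.prod else 0) := by
  induction A using List.reverseRecOn with
  | nil =>
    split_ifs with hB
    · have := MultRel.init (Δ := rect c s) (s := fun x => 0 < x)
        ((initPlus_iff s c ν (((c:ℤ), 0) :: dSteps B)).2 ⟨B, hB, rfl⟩)
      simpa [dSteps_eq] using this
    · apply MultRel.noTurn
      · rw [initPlus_iff]
        rintro ⟨t, ht, h⟩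
        have h' : dSteps B = dSteps t := by
          have : dSteps ([] : List ℕ) = [] := rfl
          rw [this] at h
          exact (List.cons.inj h).2
        rw [dSteps_injective h'] at hB
        exact hB ht
      · intro k hk
        obtain ⟨X, u, v, Y, hL, -, hd⟩ := (turnAt_pathFrom _ _ _ _).1 hk
        have hL' : [((c:ℤ), (0:ℤ))] ++ dSteps B = (X ++ [u]) ++ v :: Y := by
          simpa [dSteps_eq] using hL
        obtain ⟨h1, h2⟩ := mem_dSteps (mem_of_split_right hL' (by simp))
        have hu : 0 ≤ u.1 := by
          have : u ∈ [((c:ℤ), (0:ℤ))] ++ dSteps B := by rw [hL']; simp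
          rcases List.mem_append.1 this with h | h
          · simp at h; subst h; simp
          · rw [(mem_dSteps h).1]
        simp only [det, h1] at hd
        nlinarith
  | append_singleton A a ih =>
    have ha : 0 < a := hA a (by simp)
    have ihB := ih fun x hx => hA x (by simp [hx])
    have hL : dSteps (A ++ [a]) ++ ((c:ℤ), ((A ++ [a]).sum : ℤ)) :: dSteps B =
        dSteps A ++ ((0:ℤ), -(a:ℤ)) :: ((c:ℤ), ((A ++ [a]).sum : ℤ)) :: dSteps B := by
      simp [dSteps_eq]
    have hdet : det ((0:ℤ), -(a:ℤ)) ((c:ℤ), ((A ++ [a]).sum : ℤ)) = ((c * a : ℕ) : ℤ) := by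
      simp [det, mul_comm]
    have hpos : 0 < c * a := Nat.mul_pos hc ha
    have hcut := cut_pathFrom (0, (s:ℤ)) (dSteps A) (dSteps B) ((0:ℤ), -(a:ℤ))
      ((c:ℤ), ((A ++ [a]).sum : ℤ))
    have hadd : (((0:ℤ), -(a:ℤ)) : Pt) + ((c:ℤ), ((A ++ [a]).sum : ℤ)) = ((c:ℤ), (A.sum : ℤ)) := by
      ext <;> simp
    have hval : (if (B : Multiset ℕ) = ν then c ^ (A ++ [a]).length * (A ++ [a]).prod else 0) =
        triArea2 (pathFrom (0, (s:ℤ)) (dSteps A ++ ((0:ℤ), -(a:ℤ)) ::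
          ((c:ℤ), ((A ++ [a]).sum : ℤ)) :: dSteps B)) ((dSteps A).length + 1) *
          (if (B : Multiset ℕ) = ν then c ^ A.length * A.prod else 0) := by
      rw [triArea2_pathFrom, hdet, Int.natAbs_natCast]
      split_ifs
      · simp [pow_succ]; ring
      · simp
    rw [hval, hL]
    apply MultRel.stepOut
    · rw [initPlus_iff]
      rintro ⟨t, -, h⟩
      have hm : ((c:ℤ), ((A ++ [a]).sum : ℤ)) ∈ ((c:ℤ), (0:ℤ)) :: dSteps t := by
        rw [← h]; simp
      have : (((A ++ [a]).sum : ℕ) : ℤ) ≤ 0 := by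
        rcases List.mem_cons.1 hm with h | h
        · exact (Prod.ext_iff.1 h).2.le
        · exact (mem_dSteps h).2
      simp [-Nat.cast_list_sum] at this
      omega
    · refine ⟨(turnAt_pathFrom _ _ _ _).2 ⟨_, _, _, _, rfl, rfl, ?_⟩, ?_⟩
      · rw [hdet]; exact_mod_cast hpos
      · intro j hj
        obtain ⟨X, u, v, Y, hX, rfl, hd⟩ := (turnAt_pathFrom _ _ _ _).1 hj
        by_contra hlt
        push Not at hlt
        rw [← hL] at hX
        have hlen : X.length + 1 < (dSteps (A ++ [a])).length := by
          simp [dSteps_eq] at hlt ⊢; omega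
        have hu := mem_dSteps (mem_of_split hX (by omega))
        have hv := mem_dSteps (mem_of_split (X := X ++ [u]) (by simpa using hX) (by simpa using hlen))
        simp [det, hu.1, hv.1] at hd
    · rw [push_pathFrom]
      intro hin
      have := hin _ (mem_start_pathFrom _ _ _ _)
      rw [dSteps_sum] at this
      have h4 := this.2.2.2
      simp [-Nat.cast_list_sum] at h4
      omega
    · rw [hcut, hadd]; exact ihB

lemma minus_eval (c s : ℕ) (hc : 0 < c) (ν : Multiset ℕ) (A B : List ℕ) (hB : ∀ b ∈ B, 0 < b)
    (hA : A.sum = s) :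
    MultRel (rect c s) (InitMinusRect s {c} ν) (fun x => x < 0)
      (pathFrom (0, (s:ℤ)) (dSteps A ++ ((c:ℤ), (B.sum : ℤ)) :: dSteps B))
      (if (A : Multiset ℕ) = ν then c ^ B.length * B.prod else 0) := by
  induction B with
  | nil =>
    have hnil : dSteps ([] : List ℕ) = [] := rfl
    split_ifs with hν
    · have := MultRel.init (Δ := rect c s) (s := fun x => x < 0)
        ((initMinus_iff s c ν (dSteps A ++ [((c:ℤ), 0)])).2 ⟨A, hν, rfl⟩)
      simpa [hnil] using this
    · apply MultRel.noTurn
      · rw [initMinus_iff]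
        rintro ⟨t, ht, h⟩
        have h' : dSteps A = dSteps t := by
          rw [hnil] at h
          exact (List.append_inj' h rfl).1
        rw [dSteps_injective h'] at hν
        exact hν ht
      · intro k hk
        obtain ⟨X, u, v, Y, hL, -, hd⟩ := (turnAt_pathFrom _ _ _ _).1 hk
        have hlen := congrArg List.length hL
        simp [hnil] at hlen
        obtain ⟨h1, h2⟩ := mem_dSteps (mem_of_split hL (by omega))
        have hv : 0 ≤ v.1 := by
          have : v ∈ dSteps A ++ ((c:ℤ), (([] : List ℕ).sum : ℤ)) :: dSteps [] := by rw [hL]; simp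
          rcases List.mem_append.1 this with h | h
          · rw [(mem_dSteps h).1]
          · simp [hnil] at h; subst h; simp
        simp only [det, h1] at hd
        nlinarith
  | cons b B ih =>
    have hb : 0 < b := hB b (by simp)
    have ihB := ih fun x hx => hB x (by simp [hx])
    have hL : dSteps A ++ ((c:ℤ), ((b :: B).sum : ℤ)) :: dSteps (b :: B) =
        dSteps A ++ ((c:ℤ), ((b :: B).sum : ℤ)) :: ((0:ℤ), -(b:ℤ)) :: dSteps B := by
      simp [dSteps_eq]
    have hdet : det ((c:ℤ), ((b :: B).sum : ℤ)) ((0:ℤ), -(b:ℤ)) = -((c * b : ℕ) : ℤ) := by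
      simp [det]
    have hpos : 0 < c * b := Nat.mul_pos hc hb
    have hcut := cut_pathFrom (0, (s:ℤ)) (dSteps A) (dSteps B) 
      ((c:ℤ), ((b :: B).sum : ℤ)) ((0:ℤ), -(b:ℤ))
    have hadd : (((c:ℤ), ((b :: B).sum : ℤ)) : Pt) + ((0:ℤ), -(b:ℤ)) = ((c:ℤ), (B.sum : ℤ)) := by
      ext <;> simp
    have hval : (if (A : Multiset ℕ) = ν then c ^ (b :: B).length * (b :: B).prod else 0) =
        triArea2 (pathFrom (0, (s:ℤ)) (dSteps A ++ ((c:ℤ), ((b :: B).sum : ℤ)) ::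
          ((0:ℤ), -(b:ℤ)) :: dSteps B)) ((dSteps A).length + 1) *
          (if (A : Multiset ℕ) = ν then c ^ B.length * B.prod else 0) := by
      rw [triArea2_pathFrom, hdet, Int.natAbs_neg, Int.natAbs_natCast]
      split_ifs
      · simp [pow_succ]; ring
      · simp
    rw [hval, hL]
    apply MultRel.stepOut
    · rw [initMinus_iff]
      rintro ⟨t, -, h⟩
      have hm : ((c:ℤ), ((b :: B).sum : ℤ)) ∈ dSteps t ++ [((c:ℤ), (0:ℤ))] := by
        rw [← h]; simp
      have : (((b :: B).sum : ℕ) : ℤ) ≤ 0 := by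
        rcases List.mem_append.1 hm with h | h
        · exact (mem_dSteps h).2
        · exact (Prod.ext_iff.1 (List.mem_singleton.1 h)).2.le
      simp [-Nat.cast_list_sum] at this
      omega
    · refine ⟨(turnAt_pathFrom _ _ _ _).2 ⟨_, _, _, _, rfl, rfl, ?_⟩, ?_⟩
      · rw [hdet]; have : (0:ℤ) < ((c * b : ℕ) : ℤ) := by exact_mod_cast hpos
        omega
      · intro j hj
        obtain ⟨X, u, v, Y, hX, rfl, hd⟩ := (turnAt_pathFrom _ _ _ _).1 hj
        by_contra hlt
        push Not at hlt
        obtain ⟨h1, h2⟩ := mem_dSteps (mem_of_split hX (by omega))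
        rw [← hL] at hX
        have hv : 0 ≤ v.1 := by
          have : v ∈ dSteps A ++ ((c:ℤ), ((b :: B).sum : ℤ)) :: dSteps (b :: B) := by rw [hX]; simp
          rcases List.mem_append.1 this with h | h
          · rw [(mem_dSteps h).1]
          · rcases List.mem_cons.1 h with h | h
            · subst h; simp
            · rw [(mem_dSteps h).1]
        simp only [det, h1] at hd
        nlinarith
    · rw [push_pathFrom]
      intro hin
      have := hin _ (mem_start_pathFrom _ _ _ _)
      rw [dSteps_sum] at this
      have h4 := this.2.2.1
      simp [-Nat.cast_list_sum] at h4
      omega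
    · rw [hcut, hadd]; exact ihB

/-- The paths that contribute to the count. -/
def goodPath (c s : ℕ) (q : List ℕ × List ℕ) : List Pt :=
  pathFrom (0, (s:ℤ)) (dSteps q.1 ++ ((c:ℤ), (s:ℤ)) :: dSteps q.2)

lemma exists_dSteps {X : List Pt} {ν : Multiset ℕ}
    (h : ∀ v ∈ X, ∃ a ∈ ν, v = ((0:ℤ), -(a:ℤ))) :
    ∃ A : List ℕ, X = dSteps A ∧ ∀ a ∈ A, a ∈ ν := by
  induction X with
  | nil => exact ⟨[], rfl, by simp⟩
  | cons v X ih =>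
    obtain ⟨A, rfl, hA⟩ := ih fun w hw => h w (by simp [hw])
    obtain ⟨a, ha, rfl⟩ := h v (by simp)
    exact ⟨a :: A, by simp [dSteps_eq], by simpa [ha] using hA⟩

lemma goodPath_mem (c s : ℕ) (A B : List ℕ) (hA : A.sum = s) (hB : B.sum = s) (hc : 0 < c)
    (hA0 : ∀ a ∈ A, 0 < a) (hB0 : ∀ b ∈ B, 0 < b) : IsPathRect c s (goodPath c s (A, B)) := by
  have hd : ∀ A : List ℕ, (∀ a ∈ A, 0 < a) → ∀ v ∈ dSteps A, v.1 = 0 ∧ v.2 < 0 := by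
    intro A hA v hv
    simp only [dSteps_eq, List.mem_map] at hv
    obtain ⟨a, ha, rfl⟩ := hv
    simpa using hA a ha
  refine ⟨?_, head?_pathFrom _ _, ?_, ?_⟩
  · unfold goodPath
    rw [increasing_pathFrom]
    intro v hv
    simp only [List.mem_append, List.mem_cons] at hv
    rcases hv with hv | rfl | hv
    · exact Or.inr (hd A hA0 v hv)
    · left; simpa using hc
    · exact Or.inr (hd B hB0 v hv)
  · unfold goodPath
    rw [getLast?_pathFrom]
    simp [dSteps_sum, hA, hB]
  · intro z hz
    unfold goodPath at hz
    rw [pathFrom_append, List.mem_append] at hz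
    rcases hz with hz | hz
    · have := mem_path_dSteps _ _ _ _ hz
      rw [hA] at this
      exact ⟨this.1.ge, by rw [this.1]; simp, by linarith [this.2.1], this.2.2⟩
    · rw [dSteps_sum, hA] at hz
      have := mem_path_dSteps (c:ℤ) (s:ℤ) B z (by simpa using hz)
      rw [hB] at this
      exact ⟨by rw [this.1]; simp, this.1.le, by linarith [this.2.1], this.2.2⟩

lemma structure_of_ne_zero (c s : ℕ) (hc : 0 < c) (ν₁ ν₂ : Multiset ℕ)
    (hs1 : ν₁.sum = s) (hs2 : ν₂.sum = s) (h1 : ∀ a ∈ ν₁, 0 < a) (h2 : ∀ a ∈ ν₂, 0 < a)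
    (hdisj : Disjoint ν₁ ν₂) (γ : List Pt) (hγ : IsPathRect c s γ)
    (hlen : γ.length = ν₁.card + ν₂.card + 2)
    (hne : multRect c s {c} {c} ν₁ ν₂ γ ≠ 0) :
    ∃ A B : List ℕ, (A : Multiset ℕ) = ν₁ ∧ (B : Multiset ℕ) = ν₂ ∧ γ = goodPath c s (A, B) := by
  obtain ⟨hinc, hhd, hlast, hin⟩ := hγ
  obtain ⟨L, rfl⟩ : ∃ L, γ = pathFrom (0, (s:ℤ)) L := by
    cases γ with
    | nil => simp at hhd
    | cons p γ =>
      simp at hhd; subst hhd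
      exact exists_pathFrom _ _
  rw [pathFrom_length] at hlen
  rw [increasing_pathFrom] at hinc
  rw [getLast?_pathFrom] at hlast
  have hx : ∀ v ∈ L, 0 ≤ v.1 := by
    intro v hv
    rcases hinc v hv with h | h
    · exact h.le
    · exact h.1.ge
  obtain ⟨hp, hm⟩ := mul_ne_zero_iff.1 hne
  -- the map sending a part to the corresponding step
  let f : ℕ → Pt := fun k => ((0:ℤ), -(k:ℤ))
  have hf : Function.Injective f := by intro a b h; simpa [f] using h
  have hvd : ∀ t : List ℕ, vert (dSteps t) = (t : Multiset ℕ).map f := by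
    intro t
    unfold vert
    rw [Multiset.filter_eq_self.2]
    · rw [dSteps_eq]; rfl
    · intro v hv; exact (mem_dSteps hv).1
  have hc' : (c:ℤ) ≠ 0 := by exact_mod_cast hc.ne'
  have hle2 : ν₂.map f ≤ vert L := by
    refine vert_le (s := fun x => 0 < x) (fun x hx => ne_of_gt hx) _ (0, (s:ℤ)) ?_
      (multRel_of_ne_zero hp) hp L rfl hx
    intro M hM
    obtain ⟨t, rfl, rfl⟩ := (initPlus_iff _ _ _ _).1 hM
    rw [← hvd]
    unfold vert
    apply Multiset.filter_le_filter
    rw [← Multiset.cons_coe]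
    exact Multiset.le_cons_self _ _
  have hle1 : ν₁.map f ≤ vert L := by
    refine vert_le (s := fun x => x < 0) (fun x hx => ne_of_lt hx) _ (0, (s:ℤ)) ?_
      (multRel_of_ne_zero hm) hm L rfl hx
    intro M hM
    obtain ⟨t, rfl, rfl⟩ := (initMinus_iff _ _ _ _).1 hM
    rw [← hvd]
    unfold vert
    apply Multiset.filter_le_filter
    rw [← Multiset.coe_add]
    exact Multiset.le_add_right _ _
  have hle : (ν₁ + ν₂).map f ≤ vert L := by
    rw [Multiset.map_add, (Multiset.add_eq_union_iff_disjoint).2]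
    · exact Multiset.union_le hle1 hle2
    · rw [Multiset.disjoint_left] at hdisj ⊢
      intro v hv hv'
      obtain ⟨a, ha, rfl⟩ := Multiset.mem_map.1 hv
      obtain ⟨b, hb, hab⟩ := Multiset.mem_map.1 hv'
      rw [hf hab] at hb
      exact hdisj ha hb
  -- there is a non-vertical step
  obtain ⟨w, hw, hw0⟩ : ∃ w ∈ L, w.1 ≠ 0 := by
    by_contra hcon
    push Not at hcon
    have h1 : L.sum.1 = 0 := by
      have : ∀ M : List Pt, (∀ w ∈ M, w.1 = 0) → M.sum.1 = 0 := by
        intro M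
        induction M with
        | nil => simp
        | cons v M ih =>
          intro h
          simp [h v (by simp), ih fun w hw => h w (by simp [hw])]
      exact this L hcon
    simp only [Option.some.injEq] at hlast
    have := congrArg Prod.fst hlast
    simp [h1] at this
    omega
  obtain ⟨X, Y, rfl⟩ := List.append_of_mem hw
  have hXY : ((X ++ Y : List Pt) : Multiset Pt) = (ν₁ + ν₂).map f := by
    symm
    apply Multiset.eq_of_le_of_card_le
    · refine hle.trans ?_
      unfold vert
      rw [← Multiset.coe_add, ← Multiset.cons_coe, Multiset.filter_add,
        Multiset.filter_cons_of_neg (p := fun v : Pt => v.1 = 0) _ hw0, ← Multiset.filter_add,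
        Multiset.coe_add]
      exact Multiset.filter_le _ _
    · simp at hlen ⊢; omega
  have hmem : ∀ v ∈ X ++ Y, ∃ a ∈ ν₁ + ν₂, v = ((0:ℤ), -(a:ℤ)) := by
    intro v hv
    have : v ∈ (ν₁ + ν₂).map f := by rw [← hXY]; exact hv
    obtain ⟨a, ha, rfl⟩ := Multiset.mem_map.1 this
    exact ⟨a, ha, rfl⟩
  obtain ⟨A, rfl, hA⟩ := exists_dSteps fun v (hv : v ∈ X) => hmem v (by simp [hv])
  obtain ⟨B, rfl, hB⟩ := exists_dSteps fun v (hv : v ∈ Y) => hmem v (by simp [hv])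
  have hAB : ((A ++ B : List ℕ) : Multiset ℕ) = ν₁ + ν₂ := by
    apply Multiset.map_injective hf
    rw [← hXY]
    simp [dSteps_eq, f]
  have hsum : A.sum + B.sum = 2 * s := by
    have := congrArg Multiset.sum hAB
    simp [hs1, hs2] at this
    omega
  have hw' : w = ((c:ℤ), (s:ℤ)) := by
    simp only [List.sum_append, List.sum_cons, dSteps_sum, Option.some.injEq] at hlast
    have e1 := congrArg Prod.fst hlast
    have e2 := congrArg Prod.snd hlast
    simp [-Nat.cast_list_sum] at e1 e2
    ext
    · exact e1
    · simp; omega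
  subst hw'
  have hAs : A.sum = s := by
    have h1 := hin _ (mem_start_pathFrom _ _ _ _)
    rw [dSteps_sum] at h1
    have h3 := h1.2.2.2
    have h2 := hin (0, (s:ℤ) - A.sum) (by
      rw [pathFrom_append]
      refine List.mem_append_left _ (List.mem_of_getLast? ?_)
      rw [getLast?_pathFrom, dSteps_sum]
      simp [sub_eq_add_neg])
    have h4 := h2.2.2.1
    simp [-Nat.cast_list_sum] at h3 h4
    omega
  have hBs : B.sum = s := by omega
  have hpos : ∀ a ∈ ν₁ + ν₂, 0 < a := by
    intro a ha
    rcases Multiset.mem_add.1 ha with h | h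
    · exact h1 a h
    · exact h2 a h
  have hp' := multOf_eq (plus_eval c s hc ν₂ B A fun a ha => hpos a (hA a ha))
  have hm' := multOf_eq (minus_eval c s hc ν₁ A B (fun a ha => hpos a (hB a ha)) hAs)
  rw [hAs] at hp'
  rw [hBs] at hm'
  refine ⟨A, B, ?_, ?_, rfl⟩
  · by_contra h
    rw [if_neg h] at hm'
    exact hm hm'
  · by_contra h
    rw [if_neg h] at hp'
    exact hp hp'

lemma multRect_goodPath (c s : ℕ) (hc : 0 < c) (ν₁ ν₂ : Multiset ℕ)
    (hs1 : ν₁.sum = s) (hs2 : ν₂.sum = s) (h1 : ∀ a ∈ ν₁, 0 < a) (h2 : ∀ a ∈ ν₂, 0 < a)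
    (A B : List ℕ) (hA : (A : Multiset ℕ) = ν₁) (hB : (B : Multiset ℕ) = ν₂) :
    multRect c s {c} {c} ν₁ ν₂ (goodPath c s (A, B)) =
      ν₁.prod * ν₂.prod * c ^ (ν₁.card + ν₂.card) := by
  subst hA hB
  simp only [Multiset.sum_coe] at hs1 hs2
  have hp' := multOf_eq (plus_eval c s hc B B A fun a ha => h1 a ha)
  have hm' := multOf_eq (minus_eval c s hc A A B (fun a ha => h2 a ha) hs1)
  rw [hs1, if_pos rfl] at hp'
  rw [hs2, if_pos rfl] at hm'
  unfold multRect multPlusRect multMinusRect goodPath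
  rw [hp', hm']
  simp [pow_add]
  ring

lemma count_multiset (c s : ℕ) (hc : 0 < c) (ν₁ ν₂ : Multiset ℕ)
    (hs1 : ν₁.sum = s) (hs2 : ν₂.sum = s) (h1 : ∀ a ∈ ν₁, 0 < a) (h2 : ∀ a ∈ ν₂, 0 < a)
    (hdisj : Disjoint ν₁ ν₂) :
    (∑ᶠ γ ∈ {γ : List Pt | IsPathRect c s γ ∧ γ.length = ν₁.card + ν₂.card + 2},
        multRect c s {c} {c} ν₁ ν₂ γ) =
      (ords ν₁).card * (ords ν₂).card * (ν₁.prod * ν₂.prod * c ^ (ν₁.card + ν₂.card)) := by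
  have hinj : Set.InjOn (goodPath c s) ↑(ords ν₁ ×ˢ ords ν₂) := by
    rintro ⟨A, B⟩ hq ⟨A', B'⟩ hq' h
    simp only [Finset.coe_product, Set.mem_prod, Finset.mem_coe, mem_ords] at hq hq'
    have hl : A.length = A'.length := by
      rw [← Multiset.coe_card, ← Multiset.coe_card, hq.1, hq'.1]
    obtain ⟨e1, e2⟩ := List.append_inj (pathFrom_inj _ h) (by simp [dSteps_eq, hl])
    exact Prod.ext (dSteps_injective e1) (dSteps_injective (List.cons.inj e2).2)
  rw [finsum_mem_eq_sum_of_inter_support_eq (t := (ords ν₁ ×ˢ ords ν₂).image (goodPath c s))]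
  · rw [Finset.sum_image hinj, Finset.sum_congr rfl (g := fun _ =>
      ν₁.prod * ν₂.prod * c ^ (ν₁.card + ν₂.card))]
    · simp [Finset.card_product]
    · rintro ⟨A, B⟩ hq
      simp only [Finset.mem_product, mem_ords] at hq
      exact multRect_goodPath c s hc ν₁ ν₂ hs1 hs2 h1 h2 A B hq.1 hq.2
  · ext γ
    simp only [Set.mem_inter_iff, Function.mem_support, and_congr_left_iff]
    intro hne
    simp only [Set.mem_setOf_eq, Finset.coe_image, Set.mem_image, Finset.mem_coe,
      Finset.mem_product, mem_ords]
    constructor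
    · rintro ⟨hγ, hlen⟩
      obtain ⟨A, B, hA, hB, rfl⟩ :=
        structure_of_ne_zero c s hc ν₁ ν₂ hs1 hs2 h1 h2 hdisj γ hγ hlen hne
      exact ⟨(A, B), ⟨hA, hB⟩, rfl⟩
    · rintro ⟨⟨A, B⟩, ⟨rfl, rfl⟩, rfl⟩
      refine ⟨goodPath_mem c s A B hs1 hs2 hc h1 h2, ?_⟩
      unfold goodPath
      rw [pathFrom_length]
      simp [dSteps_eq]
      omega

/-- For `μ₁ = μ₂ = (c)` and partitions `ν₁, ν₂` of `s` with no common
part, the lattice path count in the `c × s` rectangle equals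
`(ℓ₁!/|Aut ν₁|) (ℓ₂!/|Aut ν₂|) ∏ν₁ⱼ ∏ν₂ⱼ c^{ℓ₁+ℓ₂}`. -/
theorem count_full_section_tangency (c s l1 l2 : ℕ) (hc : 0 < c) (hs : 0 < s)
    (v1 : Fin l1 → ℕ) (v2 : Fin l2 → ℕ)
    (h1 : ∀ i, 0 < v1 i) (h2 : ∀ j, 0 < v2 j)
    (hs1 : ∑ i, v1 i = s) (hs2 : ∑ j, v2 j = s)
    (hdisj : ∀ i j, v1 i ≠ v2 j) :
    ((∑ᶠ γ ∈ {γ : List Pt | IsPathRect c s γ ∧ γ.length = l1 + l2 + 2},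
        multRect c s {c} {c} ((List.ofFn v1 : List ℕ) : Multiset ℕ)
          ((List.ofFn v2 : List ℕ) : Multiset ℕ) γ : ℕ) : ℚ)
      = ((l1.factorial : ℚ) / (autCard ((List.ofFn v1 : List ℕ) : Multiset ℕ) : ℚ)) *
        ((l2.factorial : ℚ) / (autCard ((List.ofFn v2 : List ℕ) : Multiset ℕ) : ℚ)) *
        (∏ i, (v1 i : ℚ)) * (∏ j, (v2 j : ℚ)) * (c : ℚ) ^ (l1 + l2) := by
  set ν₁ : Multiset ℕ := ((List.ofFn v1 : List ℕ) : Multiset ℕ) with hν₁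
  set ν₂ : Multiset ℕ := ((List.ofFn v2 : List ℕ) : Multiset ℕ) with hν₂
  have hc1 : ν₁.card = l1 := by simp [hν₁]
  have hc2 : ν₂.card = l2 := by simp [hν₂]
  have key := count_multiset c s hc ν₁ ν₂
    (by rw [hν₁, Multiset.sum_coe, List.sum_ofFn, hs1])
    (by rw [hν₂, Multiset.sum_coe, List.sum_ofFn, hs2])
    (by intro a ha
        rw [hν₁, Multiset.mem_coe, List.mem_ofFn] at ha
        obtain ⟨i, rfl⟩ := ha
        exact h1 i)
    (by intro a ha
        rw [hν₂, Multiset.mem_coe, List.mem_ofFn] at ha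
        obtain ⟨i, rfl⟩ := ha
        exact h2 i)
    (by rw [Multiset.disjoint_left]
        intro a ha hb
        rw [hν₁, Multiset.mem_coe, List.mem_ofFn] at ha
        rw [hν₂, Multiset.mem_coe, List.mem_ofFn] at hb
        obtain ⟨i, rfl⟩ := ha
        obtain ⟨j, hj⟩ := hb
        exact hdisj i j hj.symm)
  have hp1 : ν₁.prod = ∏ i, v1 i := by rw [hν₁, Multiset.prod_coe, List.prod_ofFn]
  have hp2 : ν₂.prod = ∏ i, v2 i := by rw [hν₂, Multiset.prod_coe, List.prod_ofFn]
  have ho1 := card_ords l1 ν₁ hc1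
  have ho2 := card_ords l2 ν₂ hc2
  have ha1 : (autCard ν₁ : ℚ) ≠ 0 := by exact_mod_cast (autCard_pos ν₁).ne'
  have ha2 : (autCard ν₂ : ℚ) ≠ 0 := by exact_mod_cast (autCard_pos ν₂).ne'
  rw [hc1, hc2, hp1, hp2] at key
  rw [key, ← ho1, ← ho2]
  push_cast
  field_simp

end TropPaths
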